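/- Let f : ℝ^d → ℝ be four times continuously differentiable in a neighborhood of x with ∇f(x) ≠ 0. Then (1/ε²)( min_{y ∈ B̄_ε(x)} f(y) + max_{y ∈ B̄_ε(x)} f(y) − 2 f(x) ) = Δ_∞ f(x)/|∇f(x)|² + O(ε²) as ε → 0⁺, where Δ_∞ f(x) = (∇f)ᵀ (Hess f) (∇f)(x). -/

import Mathlib

open Metric Asymptotics
open scoped InnerProductSpace

/-- Uniform second order Taylor bound near a `C²` point. -/
lemma taylorA {E F : Type*} [NormedAddCommGroup E] [NormedSpace ℝ E]
    [NormedAddCommGroup F] [NormedSpace ℝ F] (f : E → F) (x : E) (hf : ContDiffAt ℝ 2 f x) :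
    ∃ r > 0, ∃ K ≥ (0:ℝ), (∀ y ∈ ball x r, DifferentiableAt ℝ f y) ∧
      (∀ y ∈ ball x r, ∀ z ∈ ball x r, ‖fderiv ℝ f y - fderiv ℝ f z‖ ≤ K * ‖y - z‖) ∧
      (∀ y ∈ ball x r, ∀ z ∈ ball x r,
        ‖f y - f z - fderiv ℝ f z (y - z)‖ ≤ K * ‖y - z‖ ^ 2) := by
  have h1 : ContDiffAt ℝ 1 (fderiv ℝ f) x := hf.fderiv_right (by norm_num)
  obtain ⟨K, t, ht, hL⟩ := h1.exists_lipschitzOnWith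
  have hd : ∀ᶠ y in nhds x, DifferentiableAt ℝ f y := by
    filter_upwards [hf.eventually (by simp)] with y hy
    exact hy.differentiableAt (by norm_num)
  obtain ⟨r, hr, hrs⟩ := Metric.mem_nhds_iff.1 (Filter.inter_mem ht hd)
  have hLip : ∀ y ∈ ball x r, ∀ z ∈ ball x r,
      ‖fderiv ℝ f y - fderiv ℝ f z‖ ≤ K * ‖y - z‖ := by
    intro y hy z hz
    have := hL.dist_le_mul y (hrs hy).1 z (hrs hz).1
    simpa [dist_eq_norm] using this
  refine ⟨r, hr, K, K.2, fun y hy => (hrs hy).2, hLip, ?_⟩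
  intro y hy z hz
  have hseg : segment ℝ z y ⊆ ball x r := (convex_ball x r).segment_subset hz hy
  have := (convex_segment (𝕜 := ℝ) z y).norm_image_sub_le_of_norm_hasFDerivWithin_le'
    (f := f) (f' := fderiv ℝ f) (φ := fderiv ℝ f z) (C := K * ‖y - z‖)
    (fun w hw => ((hrs (hseg hw)).2 : DifferentiableAt ℝ f w).hasFDerivAt.hasFDerivWithinAt)
    (fun w hw => by
      refine (hLip w (hseg hw) z hz).trans ?_
      have h2 : ‖w - z‖ ≤ ‖y - z‖ := by
        rw [segment_eq_image'] at hw
        obtain ⟨θ, hθ, rfl⟩ := hw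
        simp only [add_sub_cancel_left, norm_smul, Real.norm_eq_abs, abs_of_nonneg hθ.1]
        nlinarith [hθ.2, norm_nonneg (y - z)]
      gcongr) (left_mem_segment ℝ z y) (right_mem_segment ℝ z y)
  rw [pow_two, ← mul_assoc]
  exact this

/-- Symmetric second difference bound. -/
lemma symA {E F : Type*} [NormedAddCommGroup E] [NormedSpace ℝ E]
    [NormedAddCommGroup F] [NormedSpace ℝ F] (f : E → F) (x : E) (hf : ContDiffAt ℝ 2 f x) :
    ∃ r > 0, ∃ K ≥ (0:ℝ), ∀ h : E, ‖h‖ < r →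
      ‖f (x + h) + f (x - h) - (2:ℝ) • f x‖ ≤ K * ‖h‖ ^ 2 := by
  obtain ⟨r, hr, K, hK, -, -, hT⟩ := taylorA f x hf
  refine ⟨r, hr, 2 * K, by positivity, fun h hh => ?_⟩
  have h1 := hT (x + h) (by simpa [dist_eq_norm] using hh) x (mem_ball_self hr)
  have h2 := hT (x - h) (by simpa [dist_eq_norm] using hh) x (mem_ball_self hr)
  have e : f (x + h) + f (x - h) - (2:ℝ) • f x =
    (f (x + h) - f x - fderiv ℝ f x (x + h - x)) + (f (x - h) - f x - fderiv ℝ f x (x - h - x)) := by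
    have : x - h - x = -h := by abel
    rw [this, add_sub_cancel_left, map_neg, two_smul]; abel
  rw [e]
  refine (norm_add_le _ _).trans ?_
  have h3 : x - h - x = -h := by abel
  simp only [h3, norm_neg, add_sub_cancel_left] at h1 h2 ⊢
  linarith

set_option maxHeartbeats 1600000 in
/-- Fourth order symmetric expansion along a line. -/
lemma symB {E : Type*} [NormedAddCommGroup E] [NormedSpace ℝ E]
    (f : E → ℝ) (x v : E) (hv : ‖v‖ = 1) (hf : ContDiffAt ℝ 4 f x) :
    ∃ r > 0, ∃ K ≥ (0:ℝ), ∀ t : ℝ, |t| < r →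
      |f (x + t • v) + f (x - t • v) - 2 * f x - t ^ 2 * fderiv ℝ (fderiv ℝ f) x v v|
        ≤ K * t ^ 4 := by
  have hf1 : ContDiffAt ℝ 3 (fderiv ℝ f) x := hf.fderiv_right (by norm_num)
  have hf2 : ContDiffAt ℝ 2 (fderiv ℝ (fderiv ℝ f)) x := hf1.fderiv_right (by norm_num)
  obtain ⟨r0, hr0, K, hK, hS⟩ := symA _ x hf2
  obtain ⟨r1, hr1, -, -, hd1, -, -⟩ := taylorA f x (hf.of_le (by norm_num))
  obtain ⟨r2, hr2, -, -, hd2, -, -⟩ := taylorA (fderiv ℝ f) x (hf1.of_le (by norm_num))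
  set l := fderiv ℝ (fderiv ℝ f) x v v with hl
  refine ⟨min r0 (min r1 r2), by positivity, K, hK, ?_⟩
  intro t ht
  simp only [lt_min_iff] at ht
  obtain ⟨ht0, ht1, ht2⟩ := ht
  have mem : ∀ s ∈ Set.Icc (-|t|) |t|, ∀ r, |t| < r → x + s • v ∈ ball x r ∧ x - s • v ∈ ball x r := by
    intro s hs r hr
    have : |s| < r := (abs_le.2 hs).trans_lt hr
    constructor <;> simpa [dist_eq_norm, norm_smul, hv] using this
  have lp : ∀ s : ℝ, HasDerivAt (fun s : ℝ => x + s • v) v s := fun s => by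
    simpa using ((hasDerivAt_id s).smul_const v).const_add x
  have lm : ∀ s : ℝ, HasDerivAt (fun s : ℝ => x - s • v) (-v) s := fun s => by
    simpa using ((hasDerivAt_id s).smul_const v).const_sub x
  have hG1 : ∀ s ∈ Set.Icc (-|t|) |t|, HasDerivAt
      (fun s : ℝ => f (x + s • v) + f (x - s • v) - 2 * f x - s ^ 2 * l)
      (fderiv ℝ f (x + s • v) v - fderiv ℝ f (x - s • v) v - 2 * s * l) s := by
    intro s hs
    obtain ⟨m1, m2⟩ := mem s hs r1 ht1
    have a1 := (hd1 _ m1).hasFDerivAt.comp_hasDerivAt s (lp s)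
    have a2 := (hd1 _ m2).hasFDerivAt.comp_hasDerivAt s (lm s)
    have a3 := ((hasDerivAt_pow 2 s).mul_const l)
    refine HasDerivAt.congr_deriv (((a1.add a2).sub_const (2 * f x)).sub a3) ?_
    rw [map_neg]; norm_num; ring
  have hG2 : ∀ s ∈ Set.Icc (-|t|) |t|, HasDerivAt
      (fun s : ℝ => fderiv ℝ f (x + s • v) v - fderiv ℝ f (x - s • v) v - 2 * s * l)
      (fderiv ℝ (fderiv ℝ f) (x + s • v) v v + fderiv ℝ (fderiv ℝ f) (x - s • v) v v - 2 * l) s := by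
    intro s hs
    obtain ⟨m1, m2⟩ := mem s hs r2 ht2
    have a1 := (ContinuousLinearMap.apply ℝ ℝ v).hasFDerivAt.comp_hasDerivAt s
      ((hd2 _ m1).hasFDerivAt.comp_hasDerivAt s (lp s))
    have a2 := (ContinuousLinearMap.apply ℝ ℝ v).hasFDerivAt.comp_hasDerivAt s
      ((hd2 _ m2).hasFDerivAt.comp_hasDerivAt s (lm s))
    have a3 := ((hasDerivAt_id s).const_mul 2).mul_const l
    refine HasDerivAt.congr_deriv ((a1.sub a2).sub a3) ?_
    simp
  have b2 : ∀ s ∈ Set.Icc (-|t|) |t|,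
      ‖fderiv ℝ (fderiv ℝ f) (x + s • v) v v + fderiv ℝ (fderiv ℝ f) (x - s • v) v v - 2 * l‖
        ≤ K * t ^ 2 := by
    intro s hs
    have hs' := abs_le.2 hs
    have h1 := hS (s • v) (by simpa [norm_smul, hv] using hs'.trans_lt ht0)
    have h2 := ContinuousLinearMap.le_opNorm₂ (fderiv ℝ (fderiv ℝ f) (x + s • v) +
      fderiv ℝ (fderiv ℝ f) (x - s • v) - (2:ℝ) • fderiv ℝ (fderiv ℝ f) x) v v
    simp only [hv, mul_one] at h2
    have h3 : K * ‖s • v‖ ^ 2 ≤ K * t ^ 2 := by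
      rw [norm_smul, hv, mul_one, Real.norm_eq_abs, sq_abs]
      exact mul_le_mul_of_nonneg_left (sq_le_sq.2 hs') hK
    simpa [hl] using (h2.trans h1).trans h3
  have zmem : (0:ℝ) ∈ Set.Icc (-|t|) |t| := ⟨by simp, by simp⟩
  have b1 : ∀ s ∈ Set.Icc (-|t|) |t|,
      ‖fderiv ℝ f (x + s • v) v - fderiv ℝ f (x - s • v) v - 2 * s * l‖ ≤ K * t ^ 2 * |t| := by
    intro s hs
    have := (convex_Icc (-|t|) |t|).norm_image_sub_le_of_norm_hasDerivWithin_le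
      (fun s hs => (hG2 s hs).hasDerivWithinAt) b2 zmem hs
    simp only [zero_smul, add_zero, sub_zero, sub_self, mul_zero, zero_mul] at this
    refine this.trans ?_
    have := abs_le.2 hs
    rw [Real.norm_eq_abs]
    gcongr
  have tmem : t ∈ Set.Icc (-|t|) |t| := ⟨neg_abs_le t, le_abs_self t⟩
  have := (convex_Icc (-|t|) |t|).norm_image_sub_le_of_norm_hasDerivWithin_le
      (fun s hs => (hG1 s hs).hasDerivWithinAt) b1 zmem tmem
  have e : f x + f x - 2 * f x = 0 := by ring
  simp only [zero_smul, add_zero, sub_zero, e, ne_eq, OfNat.ofNat_ne_zero, not_false_eq_true,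
    zero_pow, zero_mul, Real.norm_eq_abs] at this
  refine this.trans (le_of_eq ?_)
  have : |t| * |t| = t ^ 2 := by rw [abs_mul_abs_self]; ring
  rw [mul_assoc, this]; ring

set_option maxHeartbeats 1600000 in
/-- One sided estimate. -/
lemma oneSided {E : Type*} [NormedAddCommGroup E] [InnerProductSpace ℝ E] [ProperSpace E]
    (f : E → ℝ) (x v : E) (g : ℝ) (hg : 0 < g) (hv : ‖v‖ = 1) (hf : ContDiffAt ℝ 4 f x)
    (hfg : ∀ w, fderiv ℝ f x w = g * ⟪v, w⟫_ℝ) :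
    ∃ r > 0, ∃ K ≥ (0:ℝ), ∀ ε : ℝ, 0 < ε → ε < r →
      sInf (f '' closedBall x ε) + sSup (f '' closedBall x ε) - 2 * f x
        - ε ^ 2 * fderiv ℝ (fderiv ℝ f) x v v ≤ K * ε ^ 4 := by
  have hf1 : ContDiffAt ℝ 3 (fderiv ℝ f) x := hf.fderiv_right (by norm_num)
  obtain ⟨r1, hr1, K1, hK1, hd, hLip, hT⟩ := taylorA f x (hf.of_le (by norm_num))
  obtain ⟨r2, hr2, K2, hK2, hS⟩ := symA (fderiv ℝ f) x (hf1.of_le (by norm_num))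
  obtain ⟨r3, hr3, K3, hK3, hB⟩ := symB f x v hv hf
  set l := fderiv ℝ (fderiv ℝ f) x v v with hl
  set M := 2 * (K1 * 3) / g with hM
  have hM0 : 0 ≤ M := by positivity
  set N := K1 * 3 * M / g with hN
  have hN0 : 0 ≤ N := by positivity
  refine ⟨min r1 (min r2 r3), by positivity,
    K3 + K2 * M + 2 * K1 * M ^ 2 + 2 * N * |l|, by positivity, ?_⟩
  intro ε hε hεr
  simp only [lt_min_iff] at hεr
  obtain ⟨he1, he2, he3⟩ := hεr
  have sub : closedBall x ε ⊆ ball x r1 := closedBall_subset_ball he1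
  have hc : ContinuousOn f (closedBall x ε) :=
    fun y hy => (hd y (sub hy)).continuousAt.continuousWithinAt
  have hcomp : IsCompact (f '' closedBall x ε) := (isCompact_closedBall x ε).image_of_continuousOn hc
  have hne : (f '' closedBall x ε).Nonempty := ⟨_, x, mem_closedBall_self hε.le, rfl⟩
  obtain ⟨y, hy, hyS⟩ := hcomp.sSup_mem hne
  have hmax : ∀ z ∈ closedBall x ε, f z ≤ f y := fun z hz => by
    rw [hyS]; exact le_csSup hcomp.bddAbove ⟨z, hz, rfl⟩
  have hmin : ∀ z ∈ closedBall x ε, sInf (f '' closedBall x ε) ≤ f z := fun z hz =>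
    csInf_le hcomp.bddBelow ⟨z, hz, rfl⟩
  rw [← hyS]
  obtain ⟨h, rfl⟩ : ∃ h, y = x + h := ⟨y - x, by abel⟩
  have memc : ∀ k : E, ‖k‖ ≤ ε → x + k ∈ closedBall x ε := fun k hk => by
    simpa [dist_eq_norm] using hk
  have hh : ‖h‖ ≤ ε := by simpa [dist_eq_norm] using hy
  set a := ⟪v, h⟫_ℝ with ha
  have haε : |a| ≤ ε := by
    have := abs_real_inner_le_norm v h
    rw [hv, one_mul] at this
    exact this.trans hh
  obtain ⟨w, hw⟩ : ∃ w, h = a • v + w := ⟨h - a • v, by abel⟩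
  have hvv : ⟪v, v⟫_ℝ = 1 := by rw [real_inner_self_eq_norm_sq, hv]; norm_num
  have hvw : ⟪v, w⟫_ℝ = 0 := by
    have : a = a + ⟪v, w⟫_ℝ := by
      conv_lhs => rw [ha, hw, inner_add_right, inner_smul_right, hvv, mul_one]
    linarith
  -- norms
  have hpy : ∀ b : ℝ, ‖b • v + w‖ ^ 2 = b ^ 2 + ‖w‖ ^ 2 := by
    intro b
    rw [norm_add_sq_real, inner_smul_left, hvw, norm_smul, hv]
    simp
  have hhn : a ^ 2 + ‖w‖ ^ 2 ≤ ε ^ 2 := by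
    rw [← hpy a, ← hw]; gcongr
  -- comparison with ε v
  have hεv : ‖ε • v‖ ≤ ε := by rw [norm_smul, hv, Real.norm_eq_abs, abs_of_pos hε, mul_one]
  set z := (a - ε) • v + w with hz
  have hz2 : ‖z‖ ^ 2 = (a - ε) ^ 2 + ‖w‖ ^ 2 := hpy _
  have hzle : ‖z‖ ^ 2 ≤ 2 * ε * (ε - a) := by rw [hz2]; nlinarith
  have hcmp : g * (ε - a) ≤ K1 * 3 * ε * ‖z‖ := by
    have h1 := hT (x + h) (sub hy) (x + ε • v) (sub (memc _ hεv))
    have e1 : x + h - (x + ε • v) = z := by rw [hw, hz, sub_smul]; abel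
    rw [e1] at h1
    have h2 := hmax _ (memc _ hεv)
    have h3 := hLip (x + ε • v) (sub (memc _ hεv)) x (mem_ball_self hr1)
    rw [add_sub_cancel_left] at h3
    have h4 := ContinuousLinearMap.le_opNorm (fderiv ℝ f (x + ε • v) - fderiv ℝ f x) z
    have h5 : fderiv ℝ f x z = g * (a - ε) := by
      rw [hfg, hz, inner_add_right, inner_smul_right, hvv, hvw]; ring
    rw [_root_.sub_apply, h5] at h4
    have h6 : ‖fderiv ℝ f (x + ε • v) - fderiv ℝ f x‖ * ‖z‖ ≤ K1 * ε * ‖z‖ := by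
      gcongr; exact h3.trans (by gcongr)
    have h7 : ‖z‖ ≤ 2 * ε := by
      refine abs_le_of_sq_le_sq' ?_ (by positivity) |>.2
      have := (abs_le.1 haε).1
      nlinarith
    have h8 : K1 * ‖z‖ ^ 2 ≤ K1 * (2 * ε) * ‖z‖ := by
      rw [pow_two, ← mul_assoc]; gcongr
    have h9 := (le_abs_self _).trans (h4.trans h6)
    have h10 := (le_abs_self _).trans h1
    linarith
  have hzM : ‖z‖ ≤ M * ε ^ 2 := by
    rcases (norm_nonneg z).eq_or_lt with h0 | h0
    · rw [← h0]; positivity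
    · have : g * ‖z‖ ≤ 2 * (K1 * 3) * ε ^ 2 := by
        refine le_of_mul_le_mul_right ?_ h0
        calc g * ‖z‖ * ‖z‖ = g * ‖z‖ ^ 2 := by ring
          _ ≤ g * (2 * ε * (ε - a)) := by gcongr
          _ = 2 * ε * (g * (ε - a)) := by ring
          _ ≤ 2 * ε * (K1 * 3 * ε * ‖z‖) := by gcongr
          _ = _ := by ring
      rw [hM, div_mul_eq_mul_div, le_div_iff₀ hg]; linarith
  have hwM : ‖w‖ ≤ M * ε ^ 2 := by
    refine le_trans ?_ hzM
    refine abs_le_of_sq_le_sq' ?_ (norm_nonneg _) |>.2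
    rw [hz2]; nlinarith [sq_nonneg (a - ε)]
  have haN : ε - a ≤ N * ε ^ 3 := by
    have : g * (ε - a) ≤ K1 * 3 * M * ε ^ 3 := by
      refine hcmp.trans ?_
      calc K1 * 3 * ε * ‖z‖ ≤ K1 * 3 * ε * (M * ε ^ 2) := by gcongr
        _ = _ := by ring
    rw [hN, div_mul_eq_mul_div, le_div_iff₀ hg]; linarith
  -- reflected point
  have hrefl : ‖(-a) • v + w‖ ≤ ε := by
    refine abs_le_of_sq_le_sq' ?_ hε.le |>.2
    rw [hpy]; linarith [neg_sq a]
  have hav : ‖a • v‖ ≤ ε := by rw [norm_smul, hv, mul_one]; exact haε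
  have m1 := sub (memc _ hav)
  have m2 : x - a • v ∈ ball x r1 := by
    rw [sub_eq_add_neg]; exact sub (memc _ (by rw [norm_neg]; exact hav))
  have t1 := hT (x + h) (sub hy) _ m1
  have t2 := hT (x + ((-a) • v + w)) (sub (memc _ hrefl)) _ m2
  have e1 : x + h - (x + a • v) = w := by rw [hw]; abel
  have e2 : x + ((-a) • v + w) - (x - a • v) = w := by rw [neg_smul]; abel
  rw [e1] at t1
  rw [e2] at t2
  have t3 := hS (a • v) (hav.trans_lt he2)
  have t4 := ContinuousLinearMap.le_opNorm (fderiv ℝ f (x + a • v) + fderiv ℝ f (x - a • v)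
    - (2:ℝ) • fderiv ℝ f x) w
  have t5 : fderiv ℝ f x w = 0 := by rw [hfg, hvw, mul_zero]
  simp only [_root_.sub_apply, _root_.add_apply,
    _root_.smul_apply, t5, smul_zero, sub_zero] at t4
  have t6 := hB a (haε.trans_lt he3)
  have t7 := hmin _ (memc _ hrefl)
  have ha2 : a ^ 2 ≤ ε ^ 2 := by nlinarith [sq_nonneg ‖w‖]
  have q1 : ‖fderiv ℝ f (x + a • v) + fderiv ℝ f (x - a • v)
    - (2:ℝ) • fderiv ℝ f x‖ * ‖w‖ ≤ K2 * M * ε ^ 4 := by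
    calc _ ≤ (K2 * ε ^ 2) * (M * ε ^ 2) := by
            gcongr
            exact t3.trans (by gcongr)
      _ = _ := by ring
  have q2 : K1 * ‖w‖ ^ 2 ≤ K1 * M ^ 2 * ε ^ 4 := by
    calc _ ≤ K1 * (M * ε ^ 2) ^ 2 := by gcongr
      _ = _ := by ring
  have q3 : K3 * a ^ 4 ≤ K3 * ε ^ 4 := by
    have : a ^ 4 ≤ ε ^ 4 := by nlinarith [sq_nonneg a]
    gcongr
  have q4 : (a ^ 2 - ε ^ 2) * l ≤ 2 * N * |l| * ε ^ 4 := by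
    have h1 : |a ^ 2 - ε ^ 2| ≤ 2 * N * ε ^ 4 := by
      rw [abs_of_nonpos (by linarith)]
      have h2 := abs_le.1 haε
      calc -(a ^ 2 - ε ^ 2) = (ε - a) * (ε + a) := by ring
        _ ≤ (N * ε ^ 3) * (2 * ε) := by
            apply mul_le_mul haN (by linarith) (by linarith) (by positivity)
        _ = _ := by ring
    calc _ ≤ |(a ^ 2 - ε ^ 2) * l| := le_abs_self _
      _ = |a ^ 2 - ε ^ 2| * |l| := abs_mul _ _
      _ ≤ (2 * N * ε ^ 4) * |l| := by gcongr
      _ = _ := by ring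
  have p1 := (le_abs_self _).trans t1
  have p2 := (le_abs_self _).trans t2
  have p4 := (le_abs_self _).trans t4
  have p6 := (le_abs_self _).trans t6
  linarith

theorem infinity_laplacian_ball_approximation
    (d : ℕ) (f : EuclideanSpace ℝ (Fin d) → ℝ)
    (x : EuclideanSpace ℝ (Fin d))
    (hf : ContDiffAt ℝ 4 f x) (hgrad : gradient f x ≠ 0)
    (Δinf : ℝ)
    (hΔ : Δinf = ⟪gradient f x,
        (fderiv ℝ (fun y => gradient f y) x) (gradient f x)⟫_ℝ) :
    (fun ε : ℝ =>
        (sInf (f '' closedBall x ε) + sSup (f '' closedBall x ε) - 2 * f x)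
          / ε ^ 2
        - Δinf / ‖gradient f x‖ ^ 2)
      =O[nhdsWithin 0 (Set.Ioi 0)] (fun ε : ℝ => ε ^ 2) := by
  set G := gradient f x with hG
  have hg : 0 < ‖G‖ := norm_pos_iff.2 hgrad
  have hDG : ∀ w, fderiv ℝ f x w = ⟪G, w⟫_ℝ := fun w => by
    rw [hG, gradient, InnerProductSpace.toDual_symm_apply]
  have hf1 : ContDiffAt ℝ 3 (fderiv ℝ f) x := hf.fderiv_right (by norm_num)
  have hd2 : DifferentiableAt ℝ (fderiv ℝ f) x := hf1.differentiableAt (by norm_num)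
  have hΔ2 : Δinf = fderiv ℝ (fderiv ℝ f) x G G := by
    let T : (EuclideanSpace ℝ (Fin d) →L[ℝ] ℝ) →L[ℝ] EuclideanSpace ℝ (Fin d) :=
      LinearMap.toContinuousLinearMap
        { toFun := fun φ => (InnerProductSpace.toDual ℝ (EuclideanSpace ℝ (Fin d))).symm φ
          map_add' := fun a b => map_add _ a b
          map_smul' := fun c a => by simp }
    have h1 : HasFDerivAt (fun y => gradient f y) (T.comp (fderiv ℝ (fderiv ℝ f) x)) x :=
      T.hasFDerivAt.comp x hd2.hasFDerivAt
    rw [hΔ, h1.fderiv, real_inner_comm]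
    exact InnerProductSpace.toDual_symm_apply
  set v := ‖G‖⁻¹ • G with hvdef
  have hv : ‖v‖ = 1 := by rw [hvdef, norm_smul, norm_inv, norm_norm, inv_mul_cancel₀ hg.ne']
  have hl : fderiv ℝ (fderiv ℝ f) x v v = Δinf / ‖G‖ ^ 2 := by
    rw [hΔ2, hvdef]; simp; field_simp
  have hDv : ∀ w, fderiv ℝ f x w = ‖G‖ * ⟪v, w⟫_ℝ := fun w => by
    rw [hDG, hvdef, real_inner_smul_left, mul_inv_cancel_left₀ hg.ne']
  obtain ⟨r1, hr1, K1, hK1, h1⟩ := oneSided f x v ‖G‖ hg hv hf hDv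
  have hfn : fderiv ℝ (fun y => - f y) = fun y => - fderiv ℝ f y := by
    ext1 y; exact fderiv_neg
  obtain ⟨r2, hr2, K2, hK2, h2⟩ := oneSided (fun y => - f y) x (-v) ‖G‖ hg (by rwa [norm_neg])
    hf.neg (fun w => by
      rw [hfn, _root_.neg_apply, hDv, inner_neg_left]; ring)
  have hl2 : fderiv ℝ (fderiv ℝ (fun y => - f y)) x (-v) (-v) = - (Δinf / ‖G‖ ^ 2) := by
    rw [hfn, show fderiv ℝ (fun y => - fderiv ℝ f y) x = - fderiv ℝ (fderiv ℝ f) x from fderiv_neg,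
      ← hl]; simp
  rw [hl] at h1
  rw [hl2] at h2
  refine IsBigO.of_bound (max K1 K2) ?_
  have : ∀ᶠ ε : ℝ in nhdsWithin 0 (Set.Ioi 0), ε ∈ Set.Ioo 0 (min r1 r2) :=
    Ioo_mem_nhdsGT (by positivity)
  filter_upwards [this] with ε hε
  have hε0 := hε.1
  obtain ⟨he1, he2⟩ := lt_min_iff.1 hε.2
  have i1 := h1 ε hε0 he1
  have i2 := h2 ε hε0 he2
  have himg : (fun y => - f y) '' closedBall x ε = - (f '' closedBall x ε) := by
    rw [← Set.image_neg_eq_neg, Set.image_image]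
  rw [himg, Real.sInf_neg, Real.sSup_neg] at i2
  set S := sInf (f '' closedBall x ε) + sSup (f '' closedBall x ε) - 2 * f x with hS
  set L := Δinf / ‖G‖ ^ 2
  have e : S / ε ^ 2 - L = (S - ε ^ 2 * L) / ε ^ 2 := by field_simp
  rw [e, norm_div, Real.norm_of_nonneg (sq_nonneg ε), div_le_iff₀ (by positivity), Real.norm_eq_abs]
  have h4 : max K1 K2 * ε ^ 2 * ε ^ 2 = max K1 K2 * ε ^ 4 := by ring
  rw [h4]
  have j1 : K1 * ε ^ 4 ≤ max K1 K2 * ε ^ 4 := by gcongr; exact le_max_left _ _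
  have j2 : K2 * ε ^ 4 ≤ max K1 K2 * ε ^ 4 := by gcongr; exact le_max_right _ _
  rw [abs_le]
  constructor <;> linarith
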